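/- Let T > 0, c > 0, b ≤ 0 and ρ ∈ (−1, 0]. For r > 0 let p⁺(r) = (1/(2(1 − ρ²)))·[(1 + 2ρb/c) + √((1 + 2ρb/c)² + 4(1 − ρ²)·(b²/c² + r²/(c²T²)))]. Then the set {r ∈ [π/2, π) : r·cos r = (b + ρc·p⁺(r))·T·sin r} is nonempty and possesses a smallest element r₁⁺. -/

import Mathlib

/-- The unique positive root `p⁺(r)` of the quadratic
`c²p(p−1) − (b + ρcp)² = r²/T²` in the correlated Stein–Stein model. -/
noncomputable def pPlus (b c T ρ r : ℝ) : ℝ :=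
  (1 / (2 * (1 - ρ ^ 2))) * ((1 + 2 * ρ * b / c)
    + Real.sqrt ((1 + 2 * ρ * b / c) ^ 2
        + 4 * (1 - ρ ^ 2) * (b ^ 2 / c ^ 2 + r ^ 2 / (c ^ 2 * T ^ 2))))

/-!
At `r = π/2` the left side `r * cos r` vanishes, while the right side is at most `0` because
`p⁺ ≥ 0` and `b, ρ ≤ 0`. At `r = π` the left side is `-π` and the right side vanishes. The
difference of the two sides therefore has a zero on `[π/2, π]`; its zeros form a compact set not
containing `π`, so there is a smallest one and it lies in `[π/2, π)`.
-/

theorem exists_isLeast_eq_of_continuousOn_Icc {α δ : Type*}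
    [ConditionallyCompleteLinearOrder α] [TopologicalSpace α] [OrderTopology α] [DenselyOrdered α]
    [LinearOrder δ] [TopologicalSpace δ] [OrderClosedTopology δ]
    {f g : α → δ} {a b : α} (hab : a ≤ b)
    (hf : ContinuousOn f (Set.Icc a b)) (hg : ContinuousOn g (Set.Icc a b))
    (ha : g a ≤ f a) (hb : f b < g b) :
    ∃ x, IsLeast {x | x ∈ Set.Ico a b ∧ f x = g x} x := by
  have ico_eq_icc :
      {x | x ∈ Set.Ico a b ∧ f x = g x} = {x | x ∈ Set.Icc a b ∧ f x = g x} := by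
    ext x
    refine ⟨fun ⟨hx, heq⟩ ↦ ⟨Set.Ico_subset_Icc_self hx, heq⟩, fun ⟨hx, heq⟩ ↦ ⟨⟨hx.1, ?_⟩, heq⟩⟩
    refine hx.2.lt_of_ne fun hxb ↦ hb.ne ?_
    rwa [hxb] at heq
  have closed : IsClosed {x | x ∈ Set.Icc a b ∧ f x = g x} :=
    isClosed_Icc.isClosed_eq hf hg
  have compact : IsCompact {x | x ∈ Set.Icc a b ∧ f x = g x} :=
    isCompact_Icc.of_isClosed_subset closed fun _ hx ↦ hx.1
  have nonempty : {x | x ∈ Set.Icc a b ∧ f x = g x}.Nonempty :=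
    isPreconnected_Icc.intermediate_value₂ (Set.right_mem_Icc.2 hab) (Set.left_mem_Icc.2 hab)
      hf hg hb.le ha
  rw [ico_eq_icc]
  exact compact.exists_isLeast nonempty

theorem exists_isLeast_mul_cos_eq_mul_sin {k : ℝ → ℝ}
    (hk : ContinuousOn k (Set.Icc (Real.pi / 2) Real.pi)) (hk_nonpos : k (Real.pi / 2) ≤ 0) :
    ∃ r, IsLeast {r : ℝ | r ∈ Set.Ico (Real.pi / 2) Real.pi ∧
      r * Real.cos r = k r * Real.sin r} r := by
  apply exists_isLeast_eq_of_continuousOn_Icc (half_le_self Real.pi_pos.le)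
  · fun_prop
  · fun_prop
  · simpa using hk_nonpos
  · simpa using Real.pi_pos

theorem add_sqrt_sq_add_nonneg (x : ℝ) {y : ℝ} (hy : 0 ≤ y) : 0 ≤ x + √(x ^ 2 + y) :=
  neg_le_iff_add_nonneg.1 <| Real.neg_sqrt_le_of_sq_le <| le_add_of_nonneg_right hy

theorem continuous_pPlus (b c T ρ : ℝ) : Continuous (pPlus b c T ρ) := by
  unfold pPlus
  fun_prop

theorem pPlus_nonneg {ρ : ℝ} (hρ : |ρ| ≤ 1) (b c T r : ℝ) : 0 ≤ pPlus b c T ρ r := by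
  have one_sub_sq_nonneg : 0 ≤ 1 - ρ ^ 2 := sub_nonneg.2 ((sq_le_one_iff_abs_le_one ρ).2 hρ)
  exact mul_nonneg (by positivity) (add_sqrt_sq_add_nonneg _ (by positivity))

/-- The set of `r ∈ [π/2, π)` solving the correlated transversality equation
`r·cos r = (b + ρc·p⁺(r))·T·sin r` is nonempty and has a smallest element. -/
theorem correlated_transversality_first_root
    (T b c ρ : ℝ) (hT : 0 < T) (hc : 0 < c) (hb : b ≤ 0)
    (hρ : ρ ∈ Set.Ioc (-1 : ℝ) 0) :
    ∃ r₁ : ℝ, IsLeast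
      {r : ℝ | r ∈ Set.Ico (Real.pi / 2) Real.pi ∧
        r * Real.cos r = (b + ρ * c * pPlus b c T ρ r) * T * Real.sin r} r₁ := by
  obtain ⟨neg_one_lt_ρ, ρ_nonpos⟩ := hρ
  have abs_ρ_le_one : |ρ| ≤ 1 := abs_le.2 ⟨neg_one_lt_ρ.le, ρ_nonpos.trans zero_le_one⟩
  apply exists_isLeast_mul_cos_eq_mul_sin (k := fun r ↦ (b + ρ * c * pPlus b c T ρ r) * T)
  · have := continuous_pPlus b c T ρ
    fun_prop
  · have correlation_term_nonpos : ρ * c * pPlus b c T ρ (Real.pi / 2) ≤ 0 :=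
      mul_nonpos_of_nonpos_of_nonneg (mul_nonpos_of_nonpos_of_nonneg ρ_nonpos hc.le)
        (pPlus_nonneg abs_ρ_le_one b c T _)
    exact mul_nonpos_of_nonpos_of_nonneg (add_nonpos hb correlation_term_nonpos) hT.le
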